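/- arXiv:2311.05753 — 5 statements merged into one kernel-verified Lean document; each statement's English description precedes it below -/
import Mathlib

section
/- The maps satisfy ε ∘ d = 0, d is injective, and ε is surjective. In other words, the three-term sequence A ⊕ B → A ⊕ B → K with maps d and ε is a chain complex that is exact at its two outer positions. -/
/-!
Let `k` be a field and `R = k[x₁,y₁,x₂,y₂]/(x₁y₁, x₂y₂)` the coordinate ring of the
self-product of the nodal conic, realized as `MvPolynomial (Fin 4) k` modulo the ideal
generated by `X 0 * X 1` and `X 2 * X 3`, with `x₁ = X 0`, `y₁ = X 1`, `x₂ = X 2`,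
`y₂ = X 3`.  We define the `R`-modules `A = R/(y₁,y₂)`, `B = R/(x₁,x₂)`,
`K = R/(x₁,y₁,x₂,y₂)`, the map `d : A ⊕ B → A ⊕ B`, `(a,b) ↦ ((x₁−x₂)a, (y₁−y₂)b)`,
and the map `ε : A ⊕ B → K` given by the canonical quotient maps on each factor.
-/

open MvPolynomial

set_option synthInstance.maxHeartbeats 1000000
set_option maxHeartbeats 1000000

noncomputable section

/-- The coordinate ring `R = k[x₁,y₁,x₂,y₂]/(x₁y₁, x₂y₂)` of the self-product of the
nodal conic. -/
abbrev nodalR (k : Type) [Field k] : Type :=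
  MvPolynomial (Fin 4) k ⧸
    (Ideal.span {X 0 * X 1, X 2 * X 3} : Ideal (MvPolynomial (Fin 4) k))

variable (k : Type) [Field k]

/-- `x₁` -/ def nx₁ : nodalR k := Ideal.Quotient.mk _ (X 0)
/-- `y₁` -/ def ny₁ : nodalR k := Ideal.Quotient.mk _ (X 1)
/-- `x₂` -/ def nx₂ : nodalR k := Ideal.Quotient.mk _ (X 2)
/-- `y₂` -/ def ny₂ : nodalR k := Ideal.Quotient.mk _ (X 3)

/-- The ideal `(y₁, y₂)`. -/ def JA : Ideal (nodalR k) := Ideal.span {ny₁ k, ny₂ k}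
/-- The ideal `(x₁, x₂)`. -/ def JB : Ideal (nodalR k) := Ideal.span {nx₁ k, nx₂ k}
/-- The ideal `(x₁, y₁, x₂, y₂)`. -/
def JK : Ideal (nodalR k) := Ideal.span {nx₁ k, ny₁ k, nx₂ k, ny₂ k}

/-- `A = R/(y₁,y₂)`. -/ abbrev nodalA := nodalR k ⧸ JA k
/-- `B = R/(x₁,x₂)`. -/ abbrev nodalB := nodalR k ⧸ JB k
/-- `K = R/(x₁,y₁,x₂,y₂)`. -/ abbrev nodalK := nodalR k ⧸ JK k

lemma JA_le_JK : JA k ≤ JK k := by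
  rw [JA, Ideal.span_le]
  rintro a ha
  simp only [Set.mem_insert_iff, Set.mem_singleton_iff] at ha
  rcases ha with rfl | rfl <;> exact Ideal.subset_span (by simp [JK])

lemma JB_le_JK : JB k ≤ JK k := by
  rw [JB, Ideal.span_le]
  rintro a ha
  simp only [Set.mem_insert_iff, Set.mem_singleton_iff] at ha
  rcases ha with rfl | rfl <;> exact Ideal.subset_span (by simp [JK])

/-- The canonical quotient map `A → K`. -/
def qA : nodalA k →ₗ[nodalR k] nodalK k :=
  Submodule.mapQ (JA k) (JK k) LinearMap.id (by simpa using JA_le_JK k)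

/-- The canonical quotient map `B → K`. -/
def qB : nodalB k →ₗ[nodalR k] nodalK k :=
  Submodule.mapQ (JB k) (JK k) LinearMap.id (by simpa using JB_le_JK k)

/-- `d : A ⊕ B → A ⊕ B`, `(a, b) ↦ ((x₁ − x₂)·a, (y₁ − y₂)·b)`. -/
def nodal_d : nodalA k × nodalB k →ₗ[nodalR k] nodalA k × nodalB k :=
  (LinearMap.lsmul (nodalR k) (nodalA k) (nx₁ k - nx₂ k)).prodMap
    (LinearMap.lsmul (nodalR k) (nodalB k) (ny₁ k - ny₂ k))

/-- `ε : A ⊕ B → K`, `(a, b) ↦ ā + b̄`. -/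
def nodal_ε : nodalA k × nodalB k →ₗ[nodalR k] nodalK k :=
  LinearMap.coprod (qA k) (qB k)

/-- Cancellation criterion: if `J` is the kernel of a specialization of the variables
to polynomials, then elements with nonzero specialization act injectively on `R/J`. -/
lemma nodal_cancel (J : Ideal (nodalR k)) (v : Fin 4 → MvPolynomial (Fin 4) k)
    (φ : nodalR k →+* MvPolynomial (Fin 4) k)
    (hφ : ∀ p, φ (Ideal.Quotient.mk _ p) = aeval v p)
    (hJ : ∀ g ∈ J, φ g = 0)
    (hv : ∀ i, Ideal.Quotient.mk J (Ideal.Quotient.mk _ (v i)) =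
      Ideal.Quotient.mk J (Ideal.Quotient.mk _ (X i)))
    (s : nodalR k) (hs : φ s ≠ 0) (a : nodalR k ⧸ J) (h : s • a = 0) : a = 0 := by
  obtain ⟨r, rfl⟩ := Ideal.Quotient.mk_surjective a
  have h1 : s * r ∈ J := Ideal.Quotient.eq_zero_iff_mem.mp h
  have h2 := hJ _ h1
  rw [map_mul] at h2
  have h3 : φ r = 0 := (mul_eq_zero.mp h2).resolve_left hs
  obtain ⟨p, rfl⟩ := Ideal.Quotient.mk_surjective r
  rw [hφ] at h3
  have key : ((Ideal.Quotient.mk J).comp (Ideal.Quotient.mk _)).comp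
      (aeval v : MvPolynomial (Fin 4) k →ₐ[k] MvPolynomial (Fin 4) k).toRingHom =
      (Ideal.Quotient.mk J).comp (Ideal.Quotient.mk _) := by
    apply MvPolynomial.ringHom_ext
    · intro c
      simp
    · intro i
      simpa using hv i
  have h4 := RingHom.congr_fun key p
  simp only [RingHom.comp_apply] at h4
  rw [← h4]
  change Ideal.Quotient.mk J (Ideal.Quotient.mk _ (aeval v p)) = 0
  rw [h3, map_zero, map_zero]

/-- The specialization of `R` at a point of the self-product of the nodal conic. -/
def nodalSpec (v : Fin 4 → MvPolynomial (Fin 4) k) (h1 : v 0 * v 1 = 0)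
    (h2 : v 2 * v 3 = 0) : nodalR k →+* MvPolynomial (Fin 4) k :=
  Ideal.Quotient.lift _ (aeval v : MvPolynomial (Fin 4) k →ₐ[k] _).toRingHom (by
    intro a ha
    have : Ideal.span {X 0 * X 1, X 2 * X 3} ≤
        RingHom.ker (aeval v : MvPolynomial (Fin 4) k →ₐ[k] _).toRingHom := by
      rw [Ideal.span_le]
      rintro b (rfl | rfl)
      · simp [RingHom.mem_ker, h1]
      · simp [RingHom.mem_ker, h2]
    exact this ha)

lemma nodalSpec_mk (v : Fin 4 → MvPolynomial (Fin 4) k) (h1 : v 0 * v 1 = 0)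
    (h2 : v 2 * v 3 = 0) (p : MvPolynomial (Fin 4) k) :
    nodalSpec k v h1 h2 (Ideal.Quotient.mk _ p) = aeval v p := rfl

lemma nodal_X_sub_ne (i j : Fin 4) (hij : i ≠ j) :
    (X i - X j : MvPolynomial (Fin 4) k) ≠ 0 :=
  sub_ne_zero.mpr fun h => hij (MvPolynomial.X_injective h)

lemma nodal_cancel_A (a : nodalA k) (h : (nx₁ k - nx₂ k) • a = 0) : a = 0 := by
  refine nodal_cancel k (JA k) ![X 0, 0, X 2, 0]
    (nodalSpec k _ (by simp) (by simp)) (nodalSpec_mk k _ _ _) ?_ ?_ _ ?_ a h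
  · intro g hg
    have : JA k ≤ RingHom.ker (nodalSpec k ![X 0, 0, X 2, 0] (by simp) (by simp)) := by
      rw [JA, Ideal.span_le]
      rintro b (rfl | rfl)
      · simp [RingHom.mem_ker, ny₁, nodalSpec_mk]
      · simp [RingHom.mem_ker, ny₂, nodalSpec_mk]
    exact this hg
  · have e1 : Ideal.Quotient.mk (JA k) (ny₁ k) = 0 :=
      Ideal.Quotient.eq_zero_iff_mem.mpr (Ideal.subset_span (by simp))
    have e2 : Ideal.Quotient.mk (JA k) (ny₂ k) = 0 :=
      Ideal.Quotient.eq_zero_iff_mem.mpr (Ideal.subset_span (by simp))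
    intro i
    fin_cases i
    · rfl
    · exact (by simp : _ = _).trans e1.symm
    · rfl
    · exact (by simp : _ = _).trans e2.symm
  · rw [map_sub, nx₁, nx₂, nodalSpec_mk, nodalSpec_mk]
    simpa using nodal_X_sub_ne k 0 2 (by decide)

lemma nodal_cancel_B (a : nodalB k) (h : (ny₁ k - ny₂ k) • a = 0) : a = 0 := by
  refine nodal_cancel k (JB k) ![0, X 1, 0, X 3]
    (nodalSpec k _ (by simp) (by simp)) (nodalSpec_mk k _ _ _) ?_ ?_ _ ?_ a h
  · intro g hg
    have : JB k ≤ RingHom.ker (nodalSpec k ![0, X 1, 0, X 3] (by simp) (by simp)) := by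
      rw [JB, Ideal.span_le]
      rintro b (rfl | rfl)
      · simp [RingHom.mem_ker, nx₁, nodalSpec_mk]
      · simp [RingHom.mem_ker, nx₂, nodalSpec_mk]
    exact this hg
  · have e1 : Ideal.Quotient.mk (JB k) (nx₁ k) = 0 :=
      Ideal.Quotient.eq_zero_iff_mem.mpr (Ideal.subset_span (by simp))
    have e2 : Ideal.Quotient.mk (JB k) (nx₂ k) = 0 :=
      Ideal.Quotient.eq_zero_iff_mem.mpr (Ideal.subset_span (by simp))
    intro i
    fin_cases i
    · exact (by simp : _ = _).trans e1.symm
    · rfl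
    · exact (by simp : _ = _).trans e2.symm
    · rfl
  · rw [map_sub, ny₁, ny₂, nodalSpec_mk, nodalSpec_mk]
    simpa using nodal_X_sub_ne k 1 3 (by decide)

lemma nodalK_smul (s : nodalR k) (hs : s ∈ JK k) (z : nodalK k) : s • z = 0 := by
  obtain ⟨r, rfl⟩ := Ideal.Quotient.mk_surjective z
  exact Ideal.Quotient.eq_zero_iff_mem.mpr ((JK k).mul_mem_right r hs)

/-- `ε ∘ d = 0`, `d` is injective and `ε` is surjective: the three-term sequence
`A ⊕ B → A ⊕ B → K` is a chain complex which is exact at its two outer positions. -/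
theorem nodal_conic_three_term_complex :
    (nodal_ε k).comp (nodal_d k) = 0 ∧
      Function.Injective (nodal_d k) ∧ Function.Surjective (nodal_ε k) := by
  refine ⟨?_, ?_, ?_⟩
  · apply LinearMap.ext
    rintro ⟨a, b⟩
    change qA k ((nx₁ k - nx₂ k) • a) + qB k ((ny₁ k - ny₂ k) • b) = 0
    rw [map_smul, map_smul, nodalK_smul, nodalK_smul, add_zero]
    · exact sub_mem (Ideal.subset_span (by simp)) (Ideal.subset_span (by simp))
    · exact sub_mem (Ideal.subset_span (by simp)) (Ideal.subset_span (by simp))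
  · rw [injective_iff_map_eq_zero]
    rintro ⟨a, b⟩ h
    have h1 : (nx₁ k - nx₂ k) • a = 0 := congrArg Prod.fst h
    have h2 : (ny₁ k - ny₂ k) • b = 0 := congrArg Prod.snd h
    rw [nodal_cancel_A k a h1, nodal_cancel_B k b h2]
    rfl
  · intro z
    obtain ⟨r, rfl⟩ := Ideal.Quotient.mk_surjective z
    refine ⟨(Ideal.Quotient.mk _ r, 0), ?_⟩
    change qA k (Ideal.Quotient.mk _ r) + qB k 0 = _
    rw [map_zero, add_zero]
    rfl

end
end

section
/- There is an isomorphism of R-modules (ker ε) ⧸ (range d) ≅ R ⧸ (x₁ − x₂, y₁ − y₂), where range d is regarded as a submodule of ker ε (which is legitimate since ε ∘ d = 0). -/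
/-!
Let `k` be a field and `R = k[x₁,y₁,x₂,y₂]/(x₁y₁, x₂y₂)` the coordinate ring of the
self-product of the nodal conic, realized as `MvPolynomial (Fin 4) k` modulo the ideal
generated by `X 0 * X 1` and `X 2 * X 3`, with `x₁ = X 0`, `y₁ = X 1`, `x₂ = X 2`,
`y₂ = X 3`.  We define the `R`-modules `A = R/(y₁,y₂)`, `B = R/(x₁,x₂)`,
`K = R/(x₁,y₁,x₂,y₂)`, the map `d : A ⊕ B → A ⊕ B`, `(a,b) ↦ ((x₁−x₂)a, (y₁−y₂)b)`,
and the map `ε : A ⊕ B → K` given by the canonical quotient maps on each factor.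
-/

open MvPolynomial

set_option synthInstance.maxHeartbeats 1000000
set_option maxHeartbeats 1000000

noncomputable section

variable (k : Type) [Field k]

/-- The endomorphism `x₂ ↦ x₁`, `y₂ ↦ y₁` of the polynomial ring. -/
def nsigma : MvPolynomial (Fin 4) k →ₐ[k] MvPolynomial (Fin 4) k :=
  aeval ![X 0, X 1, X 0, X 1]

/-- The map from `R` to the quotient by a divisor `g` of `x₁ y₁`. -/
def ntau (g : MvPolynomial (Fin 4) k) (hg : g ∣ X 0 * X 1) :
    nodalR k →+* MvPolynomial (Fin 4) k ⧸ Ideal.span {g} :=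
  Ideal.Quotient.lift _ ((Ideal.Quotient.mk (Ideal.span {g})).comp (nsigma k).toRingHom) (by
    intro a ha
    rw [← RingHom.mem_ker]
    refine (Ideal.span_le.2 ?_) ha
    rintro b (rfl | rfl) <;>
    · rw [SetLike.mem_coe, RingHom.mem_ker, RingHom.comp_apply, Ideal.Quotient.eq_zero_iff_mem,
        Ideal.mem_span_singleton]
      simpa [nsigma] using hg)

lemma ntau_mk (g : MvPolynomial (Fin 4) k) (hg : g ∣ X 0 * X 1) (p : MvPolynomial (Fin 4) k) :
    ntau k g hg (Ideal.Quotient.mk _ p) = Ideal.Quotient.mk _ (nsigma k p) := rfl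

lemma nsigma_diff (p : MvPolynomial (Fin 4) k) :
    Ideal.Quotient.mk (Ideal.span {nx₁ k - nx₂ k, ny₁ k - ny₂ k})
      (Ideal.Quotient.mk _ (nsigma k p)) =
    Ideal.Quotient.mk (Ideal.span {nx₁ k - nx₂ k, ny₁ k - ny₂ k})
      (Ideal.Quotient.mk _ p) := by
  have hx : Ideal.Quotient.mk (Ideal.span {nx₁ k - nx₂ k, ny₁ k - ny₂ k}) (nx₁ k) =
      Ideal.Quotient.mk _ (nx₂ k) := Ideal.Quotient.eq.2 (Ideal.subset_span (by simp))
  have hy : Ideal.Quotient.mk (Ideal.span {nx₁ k - nx₂ k, ny₁ k - ny₂ k}) (ny₁ k) =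
      Ideal.Quotient.mk _ (ny₂ k) := Ideal.Quotient.eq.2 (Ideal.subset_span (by simp))
  induction p using MvPolynomial.induction_on with
  | C a => simp [nsigma]
  | add p q hp hq => simp only [map_add, hp, hq]
  | mul_X p i hp =>
    simp only [map_mul, hp]
    congr 1
    fin_cases i
    · simp [nsigma]
    · simp [nsigma]
    · simp only [nsigma, aeval_X]
      exact hx
    · simp only [nsigma, aeval_X]
      exact hy

lemma nodal_inter (r a b p q : nodalR k) (hp : p ∈ JA k) (hq : q ∈ JB k)
    (h1 : r = (nx₁ k - nx₂ k) * a + p) (h2 : r = (ny₁ k - ny₂ k) * b + q) :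
    r ∈ Ideal.span {nx₁ k - nx₂ k, ny₁ k - ny₂ k} := by
  obtain ⟨P, rfl⟩ := Ideal.Quotient.mk_surjective r
  have d1 : X 1 ∣ nsigma k P := by
    rw [← Ideal.mem_span_singleton, ← Ideal.Quotient.eq_zero_iff_mem,
      ← ntau_mk k (X 1) (Dvd.intro_left _ rfl), h1]
    have : JA k ≤ RingHom.ker (ntau k (X 1) (Dvd.intro_left _ rfl)) := by
      rw [JA, Ideal.span_le]
      rintro c (rfl | rfl) <;>
      · rw [SetLike.mem_coe, RingHom.mem_ker]
        simp only [ny₁, ny₂]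
        rw [ntau_mk, Ideal.Quotient.eq_zero_iff_mem, Ideal.mem_span_singleton]
        simp [nsigma]
    rw [map_add, (RingHom.mem_ker).1 (this hp), map_mul, map_sub]
    simp only [nx₁, nx₂, ntau_mk]
    simp [nsigma]
  have d0 : X 0 ∣ nsigma k P := by
    rw [← Ideal.mem_span_singleton, ← Ideal.Quotient.eq_zero_iff_mem,
      ← ntau_mk k (X 0) (Dvd.intro _ rfl), h2]
    have : JB k ≤ RingHom.ker (ntau k (X 0) (Dvd.intro _ rfl)) := by
      rw [JB, Ideal.span_le]
      rintro c (rfl | rfl) <;>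
      · rw [SetLike.mem_coe, RingHom.mem_ker]
        simp only [nx₁, nx₂]
        rw [ntau_mk, Ideal.Quotient.eq_zero_iff_mem, Ideal.mem_span_singleton]
        simp [nsigma]
    rw [map_add, (RingHom.mem_ker).1 (this hq), map_mul, map_sub]
    simp only [ny₁, ny₂, ntau_mk]
    simp [nsigma]
  have d : X 0 * X 1 ∣ nsigma k P := by
    obtain ⟨c, hc⟩ := d1
    rw [hc] at d0 ⊢
    rcases (X_prime (R := k) (i := (0 : Fin 4))).dvd_or_dvd d0 with h | h
    · rw [X_dvd_X] at h
      simp at h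
    · rw [mul_comm (X 0)]
      exact mul_dvd_mul_left _ h
  rw [← Ideal.Quotient.eq_zero_iff_mem, ← nsigma_diff]
  obtain ⟨c, hc⟩ := d
  have : (Ideal.Quotient.mk (Ideal.span {X 0 * X 1, X 2 * X 3}) (nsigma k P) : nodalR k) = 0 := by
    rw [Ideal.Quotient.eq_zero_iff_mem, hc]
    exact Ideal.mul_mem_right _ _ (Ideal.subset_span (by simp))
  rw [this, map_zero]

lemma nodal_ε_mk (a b : nodalR k) :
    nodal_ε k ((JA k).mkQ a, (JB k).mkQ b) = (JK k).mkQ (a + b) := by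
  simp [nodal_ε, qA, qB]

lemma nodal_d_mk (a b : nodalR k) :
    nodal_d k ((JA k).mkQ a, (JB k).mkQ b) =
      ((JA k).mkQ ((nx₁ k - nx₂ k) * a), (JB k).mkQ ((ny₁ k - ny₂ k) * b)) := rfl

/-- The map `R → A ⊕ B`, `r ↦ (r, -r)`. -/
def nodalPhi0 : nodalR k →ₗ[nodalR k] nodalA k × nodalB k :=
  LinearMap.prod (JA k).mkQ (-(JB k).mkQ)

lemma nodalPhi0_apply (r : nodalR k) :
    nodalPhi0 k r = ((JA k).mkQ r, (JB k).mkQ (-r)) := by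
  rw [map_neg]; rfl

/-- The map `R → ker ε`, `r ↦ (r, -r)`. -/
def nodalPhi : nodalR k →ₗ[nodalR k] LinearMap.ker (nodal_ε k) :=
  LinearMap.codRestrict _ (nodalPhi0 k) (by
    intro r
    rw [LinearMap.mem_ker, nodalPhi0_apply, nodal_ε_mk, add_neg_cancel, map_zero])

lemma JK_le_sup : JK k ≤ JA k ⊔ JB k := by
  rw [JK, Ideal.span_le]
  rintro c (rfl | rfl | rfl | rfl)
  · exact Ideal.mem_sup_right (Ideal.subset_span (by simp))
  · exact Ideal.mem_sup_left (Ideal.subset_span (by simp))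
  · exact Ideal.mem_sup_right (Ideal.subset_span (by simp))
  · exact Ideal.mem_sup_left (Ideal.subset_span (by simp))

lemma nodalPhi_surj : Function.Surjective (nodalPhi k) := by
  rintro ⟨⟨a, b⟩, h⟩
  obtain ⟨a, rfl⟩ := (JA k).mkQ_surjective a
  obtain ⟨b, rfl⟩ := (JB k).mkQ_surjective b
  rw [LinearMap.mem_ker, nodal_ε_mk, Submodule.mkQ_apply, Submodule.Quotient.mk_eq_zero] at h
  obtain ⟨p, hp, q, hq, hpq⟩ := Submodule.mem_sup.1 (JK_le_sup k h)
  refine ⟨a - p, Subtype.ext ?_⟩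
  change nodalPhi0 k (a - p) = _
  rw [nodalPhi0_apply]
  refine Prod.ext ((Submodule.Quotient.eq _).2 ?_) ((Submodule.Quotient.eq _).2 ?_)
  · simpa using hp
  · have : -(a - p) - b = -q := by linear_combination hpq
    rw [this]
    exact neg_mem hq

lemma nodalPhi_ker :
    LinearMap.ker (((LinearMap.range (nodal_d k)).comap
      (LinearMap.ker (nodal_ε k)).subtype).mkQ ∘ₗ nodalPhi k) =
    Ideal.span {nx₁ k - nx₂ k, ny₁ k - ny₂ k} := by
  have key : ∀ r, r ∈ LinearMap.ker (((LinearMap.range (nodal_d k)).comap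
      (LinearMap.ker (nodal_ε k)).subtype).mkQ ∘ₗ nodalPhi k) ↔
      nodalPhi0 k r ∈ LinearMap.range (nodal_d k) := by
    intro r
    rw [LinearMap.mem_ker, LinearMap.comp_apply, Submodule.mkQ_apply,
      Submodule.Quotient.mk_eq_zero]
    rfl
  apply le_antisymm
  · intro r hr
    obtain ⟨⟨a, b⟩, h⟩ := (key r).1 hr
    obtain ⟨a, rfl⟩ := (JA k).mkQ_surjective a
    obtain ⟨b, rfl⟩ := (JB k).mkQ_surjective b
    rw [nodal_d_mk, nodalPhi0_apply, Prod.mk.injEq] at h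
    have h1 := (Submodule.Quotient.eq _).1 h.1
    have h2 := (Submodule.Quotient.eq _).1 h.2
    exact nodal_inter k r a (-b) _ _ (neg_mem h1) h2 (by ring) (by ring)
  · rw [Ideal.span_le]
    rintro c (rfl | rfl)
    · refine (key _).2 ⟨((JA k).mkQ 1, (JB k).mkQ 0), ?_⟩
      rw [nodal_d_mk, nodalPhi0_apply]
      refine Prod.ext ((Submodule.Quotient.eq _).2 ?_) ((Submodule.Quotient.eq _).2 ?_)
      · simp
      · have : (ny₁ k - ny₂ k) * 0 - -(nx₁ k - nx₂ k) = nx₁ k - nx₂ k := by ring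
        rw [this]
        exact sub_mem (Ideal.subset_span (by simp)) (Ideal.subset_span (by simp))
    · refine (key _).2 ⟨((JA k).mkQ 0, (JB k).mkQ (-1)), ?_⟩
      rw [nodal_d_mk, nodalPhi0_apply]
      refine Prod.ext ((Submodule.Quotient.eq _).2 ?_) ((Submodule.Quotient.eq _).2 ?_)
      · have : (nx₁ k - nx₂ k) * 0 - (ny₁ k - ny₂ k) = -(ny₁ k - ny₂ k) := by ring
        rw [this]
        exact neg_mem (sub_mem (Ideal.subset_span (by simp)) (Ideal.subset_span (by simp)))
      · have : (ny₁ k - ny₂ k) * (-1) - -(ny₁ k - ny₂ k) = 0 := by ring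
        rw [this]
        exact zero_mem _

/-- The middle homology of the three-term complex `A ⊕ B →(d) A ⊕ B →(ε) K`, namely
`(ker ε) ⧸ (range d)` (with `range d` regarded as a submodule of `ker ε`, which is
legitimate since `ε ∘ d = 0`), is isomorphic as an `R`-module to
`R ⧸ (x₁ − x₂, y₁ − y₂)`. -/
theorem nodal_conic_middle_homology :
    Nonempty ((↥(LinearMap.ker (nodal_ε k)) ⧸
        (LinearMap.range (nodal_d k)).comap (LinearMap.ker (nodal_ε k)).subtype)
      ≃ₗ[nodalR k]
        (nodalR k ⧸ (Ideal.span {nx₁ k - nx₂ k, ny₁ k - ny₂ k} : Ideal (nodalR k)))) := by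
  exact ⟨((Submodule.quotEquivOfEq _ _ (nodalPhi_ker k)).symm.trans
    (LinearMap.quotKerEquivOfSurjective _
      ((Submodule.mkQ_surjective _).comp (nodalPhi_surj k)))).symm⟩

end
end

section
/- The three-term chain complex of R-modules A ⊕ B →(d) A ⊕ B →(ε) K, placed in homological degrees 1, 0, −1, has homology concentrated in degree 0, and its degree-0 homology is isomorphic as an R-module to R ⧸ (x₁ − x₂, y₁ − y₂); that is, this complex is quasi-isomorphic to the diagonal module R/(x₁−x₂, y₁−y₂) placed in degree 0. -/
/-!
Let `k` be a field and `R = k[x₁,y₁,x₂,y₂]/(x₁y₁, x₂y₂)` the coordinate ring of the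
self-product of the nodal conic, realized as `MvPolynomial (Fin 4) k` modulo the ideal
generated by `X 0 * X 1` and `X 2 * X 3`, with `x₁ = X 0`, `y₁ = X 1`, `x₂ = X 2`,
`y₂ = X 3`.  We define the `R`-modules `A = R/(y₁,y₂)`, `B = R/(x₁,x₂)`,
`K = R/(x₁,y₁,x₂,y₂)`, the map `d : A ⊕ B → A ⊕ B`, `(a,b) ↦ ((x₁−x₂)a, (y₁−y₂)b)`,
and the map `ε : A ⊕ B → K` given by the canonical quotient maps on each factor.
-/

open MvPolynomial

set_option synthInstance.maxHeartbeats 1000000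
set_option maxHeartbeats 1000000

noncomputable section

variable (k : Type) [Field k]

/-- Nonzerodivisor criterion via a retraction `X i ↦ v i`. -/
lemma nodal_key (v : Fin 4 → MvPolynomial (Fin 4) k) (h01 : v 0 * v 1 = 0) (h23 : v 2 * v 3 = 0)
    (J : Ideal (nodalR k))
    (hJ : ∀ i, (Ideal.Quotient.mk (Ideal.span {X 0 * X 1, X 2 * X 3} :
      Ideal (MvPolynomial (Fin 4) k)) (X i) - Ideal.Quotient.mk _ (v i)) ∈ J) :
    ∃ f : nodalR k →+* MvPolynomial (Fin 4) k,
      (∀ i, f (Ideal.Quotient.mk _ (X i)) = v i) ∧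
      ((∀ s ∈ J, f s = 0) → ∀ z c, f z ≠ 0 → z * c ∈ J → c ∈ J) := by
  set I : Ideal (MvPolynomial (Fin 4) k) := Ideal.span {X 0 * X 1, X 2 * X 3} with hI
  have hk : ∀ a ∈ I, (aeval v : MvPolynomial (Fin 4) k →ₐ[k] _).toRingHom a = 0 := by
    intro a ha
    have : I ≤ RingHom.ker (aeval v : MvPolynomial (Fin 4) k →ₐ[k] _).toRingHom := by
      rw [hI, Ideal.span_le]
      rintro a ha
      simp only [Set.mem_insert_iff, Set.mem_singleton_iff] at ha
      rcases ha with rfl | rfl <;> simp [RingHom.mem_ker, h01, h23]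
    exact this ha
  refine ⟨Ideal.Quotient.lift I _ hk, fun i => aeval_X v i, ?_⟩
  intro hf z c hz hzc
  have h1 := hf _ hzc
  rw [map_mul] at h1
  have h2 := (mul_eq_zero.mp h1).resolve_left hz
  obtain ⟨p, rfl⟩ := Ideal.Quotient.mk_surjective c
  have h3 : (aeval v : MvPolynomial (Fin 4) k →ₐ[k] _) p = 0 := h2
  let q : MvPolynomial (Fin 4) k →+* (nodalR k ⧸ J) :=
    (Ideal.Quotient.mk J).comp (Ideal.Quotient.mk I)
  have h4 : q.comp (aeval v : MvPolynomial (Fin 4) k →ₐ[k] _).toRingHom = q := by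
    apply MvPolynomial.ringHom_ext
    · intro r
      simp [MvPolynomial.algebraMap_eq]
    · intro i
      have := (Ideal.Quotient.eq (I := J)).mpr (hJ i)
      simpa [q] using this.symm
  have h5 := RingHom.congr_fun h4 p
  have h6 : q p = 0 := by
    rw [← h5]; change q ((aeval v : MvPolynomial (Fin 4) k →ₐ[k] _) p) = 0
    rw [h3, map_zero]
  exact Ideal.Quotient.eq_zero_iff_mem.mp h6

lemma nodal_xy₁ : nx₁ k * ny₁ k = 0 := by
  rw [nx₁, ny₁, ← map_mul]
  exact Ideal.Quotient.eq_zero_iff_mem.mpr (Ideal.subset_span (by simp))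

lemma nodal_span_zero {S : Set (nodalR k)} (f : nodalR k →+* MvPolynomial (Fin 4) k)
    (h : ∀ s ∈ S, f s = 0) : ∀ s ∈ Ideal.span S, f s = 0 := by
  have : Ideal.span S ≤ RingHom.ker f := Ideal.span_le.mpr h
  exact fun s hs => this hs

lemma nodal_ne {i j : Fin 4} (h : i ≠ j) : (X i - X j : MvPolynomial (Fin 4) k) ≠ 0 :=
  sub_ne_zero.mpr fun e => h (X_injective e)

lemma nodal_A (c : nodalR k) (h : (nx₁ k - nx₂ k) * c ∈ JA k) : c ∈ JA k := by
  have hy1 : ny₁ k ∈ JA k := Ideal.subset_span (by simp)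
  have hy2 : ny₂ k ∈ JA k := Ideal.subset_span (by simp)
  obtain ⟨f, hf, hc⟩ := nodal_key k ![X 0, 0, X 2, 0] (by simp) (by simp) (JA k) (by
    intro i
    fin_cases i
    · simp
    · simpa [nx₁, nx₂, ny₁, ny₂] using hy1
    · simp
    · simpa [nx₁, nx₂, ny₁, ny₂] using hy2)
  refine hc (nodal_span_zero k f ?_) _ _ ?_ h
  · rintro s (rfl | rfl)
    · exact hf 1
    · exact hf 3
  · have e0 : f (nx₁ k) = X 0 := hf 0
    have e2 : f (nx₂ k) = X 2 := hf 2
    rw [map_sub, e0, e2]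
    exact nodal_ne k (by decide)

lemma nodal_B (c : nodalR k) (h : (ny₁ k - ny₂ k) * c ∈ JB k) : c ∈ JB k := by
  have hy1 : nx₁ k ∈ JB k := Ideal.subset_span (by simp)
  have hy2 : nx₂ k ∈ JB k := Ideal.subset_span (by simp)
  obtain ⟨f, hf, hc⟩ := nodal_key k ![0, X 1, 0, X 3] (by simp) (by simp) (JB k) (by
    intro i
    fin_cases i
    · simpa [nx₁, nx₂, ny₁, ny₂] using hy1
    · simp
    · simpa [nx₁, nx₂, ny₁, ny₂] using hy2
    · simp)
  refine hc (nodal_span_zero k f ?_) _ _ ?_ h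
  · rintro s (rfl | rfl)
    · exact hf 0
    · exact hf 2
  · have e0 : f (ny₁ k) = X 1 := hf 1
    have e2 : f (ny₂ k) = X 3 := hf 3
    rw [map_sub, e0, e2]
    exact nodal_ne k (by decide)

lemma nodal_BD (c : nodalR k)
    (h : ny₁ k * c ∈ Ideal.span {nx₁ k, nx₂ k, ny₁ k - ny₂ k}) :
    c ∈ Ideal.span {nx₁ k, nx₂ k, ny₁ k - ny₂ k} := by
  set J := Ideal.span {nx₁ k, nx₂ k, ny₁ k - ny₂ k} with hJ
  have hy1 : nx₁ k ∈ J := Ideal.subset_span (by simp)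
  have hy2 : nx₂ k ∈ J := Ideal.subset_span (by simp)
  have hy3 : ny₂ k - ny₁ k ∈ J := by
    rw [← neg_sub]; exact J.neg_mem (Ideal.subset_span (by simp))
  obtain ⟨f, hf, hc⟩ := nodal_key k ![0, X 1, 0, X 1] (by simp) (by simp) J (by
    intro i
    fin_cases i
    · simpa [nx₁, nx₂, ny₁, ny₂] using hy1
    · simp
    · simpa [nx₁, nx₂, ny₁, ny₂] using hy2
    · simpa [nx₁, nx₂, ny₁, ny₂] using hy3)
  have e1 : f (ny₁ k) = X 1 := hf 1
  have e3 : f (ny₂ k) = X 1 := hf 3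
  refine hc (nodal_span_zero k f ?_) _ _ ?_ h
  · rintro s (rfl | rfl | rfl)
    · exact hf 0
    · exact hf 2
    · rw [map_sub, e1, e3, sub_self]
  · rw [e1]
    exact X_ne_zero _

lemma nodal_ker (r a b : nodalR k) (hA : (nx₁ k - nx₂ k) * a - r ∈ JA k)
    (hB : (ny₁ k - ny₂ k) * b + r ∈ JB k) :
    r ∈ Ideal.span {nx₁ k - nx₂ k, ny₁ k - ny₂ k} := by
  obtain ⟨p1, p2, hp⟩ := Ideal.mem_span_pair.mp hA
  obtain ⟨q1, q2, hq⟩ := Ideal.mem_span_pair.mp hB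
  have hxy := nodal_xy₁ k
  have h := nodal_BD k (p1 + p2) (by
    have : ny₁ k * (p1 + p2) = (a - q1) * nx₁ k + (-a - q2) * nx₂ k
        + (p2 + b) * (ny₁ k - ny₂ k) := by linear_combination hp + hq
    rw [this]
    refine add_mem (add_mem ?_ ?_) ?_ <;>
      exact Ideal.mul_mem_left _ _ (Ideal.subset_span (by simp)))
  rw [Ideal.mem_span_insert] at h
  obtain ⟨u, z, hz, h⟩ := h
  obtain ⟨w, t, rfl⟩ := Ideal.mem_span_pair.mp hz
  rw [Ideal.mem_span_pair]
  refine ⟨a + ny₁ k * w, p2 - ny₁ k * t, ?_⟩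
  linear_combination -hp + ny₁ k * h + (u + w) * hxy

/-- The three-term chain complex `A ⊕ B →(d) A ⊕ B →(ε) K`, placed in homological degrees
`1, 0, −1`, has homology concentrated in degree `0` (i.e. it is a complex, `d` is injective
— vanishing of the degree-1 homology — and `ε` is surjective — vanishing of the
degree-(−1) homology), and its degree-0 homology `(ker ε) ⧸ (range d)` is isomorphic as an
`R`-module to `R ⧸ (x₁ − x₂, y₁ − y₂)`; that is, the complex is quasi-isomorphic to the
diagonal module `R/(x₁−x₂, y₁−y₂)` placed in degree `0`. -/
theorem nodal_conic_resolution_of_diagonal :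
    (nodal_ε k).comp (nodal_d k) = 0 ∧
      Function.Injective (nodal_d k) ∧
      Function.Surjective (nodal_ε k) ∧
      Nonempty ((↥(LinearMap.ker (nodal_ε k)) ⧸
          (LinearMap.range (nodal_d k)).comap (LinearMap.ker (nodal_ε k)).subtype)
        ≃ₗ[nodalR k]
          (nodalR k ⧸ (Ideal.span {nx₁ k - nx₂ k, ny₁ k - ny₂ k} : Ideal (nodalR k)))) := by
  have hsplit : ∀ t ∈ JK k, ∃ p ∈ JA k, ∃ q ∈ JB k, p + q = t := by
    intro t ht
    have : JK k ≤ JA k ⊔ JB k := by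
      rw [JK, Ideal.span_le]
      rintro s (rfl | rfl | rfl | rfl)
      · exact Ideal.mem_sup_right (Ideal.subset_span (by simp))
      · exact Ideal.mem_sup_left (Ideal.subset_span (by simp))
      · exact Ideal.mem_sup_right (Ideal.subset_span (by simp))
      · exact Ideal.mem_sup_left (Ideal.subset_span (by simp))
    exact Submodule.mem_sup.mp (this ht)
  have hε : ∀ r s : nodalR k, nodal_ε k (Submodule.Quotient.mk r, Submodule.Quotient.mk s)
      = Submodule.Quotient.mk (r + s) := fun r s => rfl
  have hd : ∀ r s : nodalR k, nodal_d k (Submodule.Quotient.mk r, Submodule.Quotient.mk s)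
      = (Submodule.Quotient.mk ((nx₁ k - nx₂ k) * r),
        Submodule.Quotient.mk ((ny₁ k - ny₂ k) * s)) := fun r s => rfl
  have hx1 : nx₁ k ∈ JK k := Ideal.subset_span (by simp)
  have hy1 : ny₁ k ∈ JK k := Ideal.subset_span (by simp)
  have hx2 : nx₂ k ∈ JK k := Ideal.subset_span (by simp)
  have hy2 : ny₂ k ∈ JK k := Ideal.subset_span (by simp)
  refine ⟨?_, ?_, ?_, ?_⟩
  · apply LinearMap.ext
    rintro ⟨a, b⟩
    obtain ⟨r, rfl⟩ := Submodule.Quotient.mk_surjective _ a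
    obtain ⟨s, rfl⟩ := Submodule.Quotient.mk_surjective _ b
    rw [LinearMap.comp_apply, hd, hε, LinearMap.zero_apply, Submodule.Quotient.mk_eq_zero]
    exact add_mem (Ideal.mul_mem_right _ _ (sub_mem hx1 hx2))
      (Ideal.mul_mem_right _ _ (sub_mem hy1 hy2))
  · rw [injective_iff_map_eq_zero]
    rintro ⟨a, b⟩ h
    obtain ⟨r, rfl⟩ := Submodule.Quotient.mk_surjective _ a
    obtain ⟨s, rfl⟩ := Submodule.Quotient.mk_surjective _ b
    rw [hd, Prod.mk_eq_zero, Submodule.Quotient.mk_eq_zero, Submodule.Quotient.mk_eq_zero] at h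
    rw [Prod.mk_eq_zero, Submodule.Quotient.mk_eq_zero, Submodule.Quotient.mk_eq_zero]
    exact ⟨nodal_A k r h.1, nodal_B k s h.2⟩
  · intro c
    obtain ⟨r, rfl⟩ := Submodule.Quotient.mk_surjective _ c
    exact ⟨(Submodule.Quotient.mk r, Submodule.Quotient.mk 0), by rw [hε, add_zero]⟩
  · let φ₀ : nodalR k →ₗ[nodalR k] nodalA k × nodalB k :=
      (JA k).mkQ.prod (-(JB k).mkQ)
    have hφ₀ : ∀ r, φ₀ r = (Submodule.Quotient.mk r, Submodule.Quotient.mk (-r)) := fun r => rfl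
    let φ : nodalR k →ₗ[nodalR k] LinearMap.ker (nodal_ε k) :=
      φ₀.codRestrict _ (fun r => by
        rw [LinearMap.mem_ker, hφ₀, hε, add_neg_cancel, Submodule.Quotient.mk_zero])
    let N := (LinearMap.range (nodal_d k)).comap (LinearMap.ker (nodal_ε k)).subtype
    let ψ : nodalR k →ₗ[nodalR k] (↥(LinearMap.ker (nodal_ε k)) ⧸ N) := N.mkQ.comp φ
    have hsurj : Function.Surjective ψ := by
      refine (Submodule.mkQ_surjective N).comp ?_
      rintro ⟨⟨a, b⟩, h⟩
      obtain ⟨r, rfl⟩ := Submodule.Quotient.mk_surjective _ a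
      obtain ⟨s, rfl⟩ := Submodule.Quotient.mk_surjective _ b
      have h' := h
      rw [LinearMap.mem_ker, hε, Submodule.Quotient.mk_eq_zero] at h'
      obtain ⟨p, hp, q, hq, e⟩ := hsplit _ h'
      refine ⟨r - p, Subtype.ext ?_⟩
      change φ₀ (r - p) = _
      rw [hφ₀]
      refine Prod.ext ?_ ?_
      · refine (Submodule.Quotient.eq _).mpr ?_
        have : r - p - r = -p := by ring
        rw [this]; exact neg_mem hp
      · refine (Submodule.Quotient.eq _).mpr ?_
        have : -(r - p) - s = -q := by linear_combination e
        rw [this]; exact neg_mem hq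
    have hker : LinearMap.ker ψ = Ideal.span {nx₁ k - nx₂ k, ny₁ k - ny₂ k} := by
      have hmem : ∀ r, r ∈ LinearMap.ker ψ ↔ ∃ z, nodal_d k z = φ₀ r := by
        intro r
        rw [LinearMap.mem_ker]
        change Submodule.Quotient.mk (φ r) = 0 ↔ _
        rw [Submodule.Quotient.mk_eq_zero]
        rfl
      apply le_antisymm
      · intro r hr
        obtain ⟨⟨a, b⟩, h⟩ := (hmem r).mp hr
        obtain ⟨a, rfl⟩ := Submodule.Quotient.mk_surjective _ a
        obtain ⟨b, rfl⟩ := Submodule.Quotient.mk_surjective _ b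
        rw [hd, hφ₀, Prod.mk.injEq, Submodule.Quotient.eq, Submodule.Quotient.eq,
          sub_neg_eq_add] at h
        exact nodal_ker k r a b h.1 h.2
      · refine Ideal.span_le.mpr ?_
        rintro s (rfl | rfl)
        · refine (hmem _).mpr ⟨(Submodule.Quotient.mk 1, Submodule.Quotient.mk 0), ?_⟩
          rw [hd, hφ₀, mul_one, mul_zero]
          refine Prod.ext rfl ((Submodule.Quotient.eq _).mpr ?_)
          rw [zero_sub, neg_neg]
          exact sub_mem (Ideal.subset_span (by simp)) (Ideal.subset_span (by simp))
        · refine (hmem _).mpr ⟨(Submodule.Quotient.mk 0, Submodule.Quotient.mk (-1)), ?_⟩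
          have e : (ny₁ k - ny₂ k) * (-1) = -(ny₁ k - ny₂ k) := by ring
          rw [hd, hφ₀, mul_zero, e]
          refine Prod.ext ((Submodule.Quotient.eq _).mpr ?_) rfl
          rw [zero_sub]
          exact neg_mem (sub_mem (Ideal.subset_span (by simp)) (Ideal.subset_span (by simp)))
    exact ⟨((Submodule.quotEquivOfEq _ _ hker.symm).trans
      (ψ.quotKerEquivOfSurjective hsurj)).symm⟩

end
end

section
/- Let J_x = ker(A → K) and J_y = ker(B → K) be the kernels of the canonical quotient maps, and note that (x₁−x₂)·A ⊆ J_x and (y₁−y₂)·B ⊆ J_y. Then there exists a short exact sequence of R-modules 0 → J_x⧸((x₁−x₂)·A) ⊕ J_y⧸((y₁−y₂)·B) → R⧸(x₁−x₂, y₁−y₂) → K → 0 in which the surjection is the canonical quotient map R/(x₁−x₂, y₁−y₂) → R/(x₁,y₁,x₂,y₂); equivalently, there exists an injective R-linear map from J_x/((x₁−x₂)·A) ⊕ J_y/((y₁−y₂)·B) whose image is exactly the kernel of that canonical quotient map. -/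
/-!
Let `k` be a field and `R = k[x₁,y₁,x₂,y₂]/(x₁y₁, x₂y₂)` the coordinate ring of the
self-product of the nodal conic, realized as `MvPolynomial (Fin 4) k` modulo the ideal
generated by `X 0 * X 1` and `X 2 * X 3`, with `x₁ = X 0`, `y₁ = X 1`, `x₂ = X 2`,
`y₂ = X 3`.  We define the `R`-modules `A = R/(y₁,y₂)`, `B = R/(x₁,x₂)`,
`K = R/(x₁,y₁,x₂,y₂)`, the map `d : A ⊕ B → A ⊕ B`, `(a,b) ↦ ((x₁−x₂)a, (y₁−y₂)b)`,
and the map `ε : A ⊕ B → K` given by the canonical quotient maps on each factor.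
-/

open MvPolynomial

set_option synthInstance.maxHeartbeats 1000000
set_option maxHeartbeats 1000000

noncomputable section

variable (k : Type) [Field k]

/-- The submodule `(x₁ − x₂)·A ⊆ A`. -/
def cxA : Submodule (nodalR k) (nodalA k) :=
  LinearMap.range (LinearMap.lsmul (nodalR k) (nodalA k) (nx₁ k - nx₂ k))

/-- The submodule `(y₁ − y₂)·B ⊆ B`. -/
def cyB : Submodule (nodalR k) (nodalB k) :=
  LinearMap.range (LinearMap.lsmul (nodalR k) (nodalB k) (ny₁ k - ny₂ k))

/-- The ideal `(x₁ − x₂, y₁ − y₂)` of `R`, cutting out the diagonal. -/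
def JΔ : Ideal (nodalR k) := Ideal.span {nx₁ k - nx₂ k, ny₁ k - ny₂ k}

lemma JΔ_le_JK : JΔ k ≤ JK k := by
  rw [JΔ, Ideal.span_le]
  rintro a ha
  simp only [Set.mem_insert_iff, Set.mem_singleton_iff] at ha
  rcases ha with rfl | rfl <;>
    exact sub_mem (Ideal.subset_span (by simp [JK])) (Ideal.subset_span (by simp [JK]))

/-- The canonical quotient map `R/(x₁−x₂, y₁−y₂) → R/(x₁,y₁,x₂,y₂) = K`. -/
def πΔ : (nodalR k ⧸ JΔ k) →ₗ[nodalR k] nodalK k :=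
  Submodule.mapQ (JΔ k) (JK k) LinearMap.id (by simpa using JΔ_le_JK k)

/-- `J_x/((x₁−x₂)·A)`, with `J_x = ker(A → K)`. -/
abbrev Qx := ↥(LinearMap.ker (qA k)) ⧸
  (cxA k).comap (LinearMap.ker (qA k)).subtype

/-- `J_y/((y₁−y₂)·B)`, with `J_y = ker(B → K)`. -/
abbrev Qy := ↥(LinearMap.ker (qB k)) ⧸
  (cyB k).comap (LinearMap.ker (qB k)).subtype
lemma exists_inj_of_ker_eq {R M N P : Type*} [Ring R] [AddCommGroup M] [AddCommGroup N]
    [AddCommGroup P] [Module R M] [Module R N] [Module R P] (f : M →ₗ[R] N) (g : M →ₗ[R] P)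
    (hf : Function.Surjective f) (h : LinearMap.ker f = LinearMap.ker g) :
    ∃ ι : N →ₗ[R] P, Function.Injective ι ∧ LinearMap.range ι = LinearMap.range g := by
  let e := f.quotKerEquivOfSurjective hf
  refine ⟨((LinearMap.ker f).liftQ g h.le).comp e.symm.toLinearMap, ?_, ?_⟩
  · rw [LinearMap.coe_comp]
    refine Function.Injective.comp ?_ e.symm.injective
    refine LinearMap.ker_eq_bot.1 ?_
    exact Submodule.ker_liftQ_eq_bot _ _ _ h.ge
  · rw [LinearMap.range_comp, LinearEquiv.range, Submodule.map_top, Submodule.range_liftQ]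

/-- The retraction identifying the two copies of each variable. -/
def nodalS : MvPolynomial (Fin 4) k →ₐ[k] MvPolynomial (Fin 4) k :=
  aeval ![X 0, X 1, X 0, X 1]

lemma nodalS_sub (p : MvPolynomial (Fin 4) k) :
    (Ideal.Quotient.mk _ (nodalS k p) : nodalR k) - Ideal.Quotient.mk _ p ∈ JΔ k := by
  induction p using MvPolynomial.induction_on with
  | C a => simp [nodalS]
  | add p q hp hq =>
    have := add_mem hp hq
    simp only [map_add]
    convert this using 1
    ring
  | mul_X p i hp =>
    have hi : (Ideal.Quotient.mk _ (nodalS k (X i)) : nodalR k) - Ideal.Quotient.mk _ (X i)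
        ∈ JΔ k := by
      fin_cases i
      · simp [nodalS]
      · simp [nodalS]
      · have h : nx₁ k - nx₂ k ∈ JΔ k := Ideal.subset_span (by simp)
        simpa [nodalS, nx₁, nx₂] using h
      · have h : ny₁ k - ny₂ k ∈ JΔ k := Ideal.subset_span (by simp)
        simpa [nodalS, ny₁, ny₂] using h
    have := add_mem (Ideal.mul_mem_right (Ideal.Quotient.mk _ (nodalS k (X i))) _ hp)
      (Ideal.mul_mem_left _ (Ideal.Quotient.mk _ p) hi)
    simp only [map_mul]
    convert this using 1
    ring

/-- The ring map from `R` induced by the retraction, modulo one of the variables. -/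
def nodalPsi (i : Fin 4) (hi : i = 0 ∨ i = 1) :
    nodalR k →+* MvPolynomial (Fin 4) k ⧸ (Ideal.span {X i} : Ideal (MvPolynomial (Fin 4) k)) :=
  Ideal.Quotient.lift _ ((Ideal.Quotient.mk _).comp (nodalS k).toRingHom) (by
    intro a ha
    rw [← RingHom.mem_ker]
    refine (Ideal.span_le (I := RingHom.ker _)).2 ?_ ha
    rintro a (rfl | rfl) <;> rcases hi with rfl | rfl <;>
      simp [RingHom.mem_ker, nodalS, Ideal.Quotient.eq_zero_iff_mem, Ideal.mem_span_singleton])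

lemma nodalPsi_mk (i : Fin 4) (hi : i = 0 ∨ i = 1) (p : MvPolynomial (Fin 4) k) :
    nodalPsi k i hi (Ideal.Quotient.mk _ p) = Ideal.Quotient.mk _ (nodalS k p) := rfl

lemma dvd_of_psi (i : Fin 4) (hi : i = 0 ∨ i = 1) (p : MvPolynomial (Fin 4) k)
    (h : nodalPsi k i hi (Ideal.Quotient.mk _ p) = 0) : X i ∣ nodalS k p := by
  rwa [nodalPsi_mk, Ideal.Quotient.eq_zero_iff_mem, Ideal.mem_span_singleton] at h

lemma psi_JA (r : nodalR k) (h : r ∈ JA k) : nodalPsi k 1 (Or.inr rfl) r = 0 := by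
  rw [← RingHom.mem_ker]
  refine (Ideal.span_le (I := RingHom.ker _)).2 ?_ h
  rintro a (rfl | rfl) <;>
    simp [RingHom.mem_ker, ny₁, ny₂, nodalPsi_mk, nodalS, Ideal.Quotient.eq_zero_iff_mem,
      Ideal.mem_span_singleton]

lemma psi_JB (r : nodalR k) (h : r ∈ JB k) : nodalPsi k 0 (Or.inl rfl) r = 0 := by
  rw [← RingHom.mem_ker]
  refine (Ideal.span_le (I := RingHom.ker _)).2 ?_ h
  rintro a (rfl | rfl) <;>
    simp [RingHom.mem_ker, nx₁, nx₂, nodalPsi_mk, nodalS, Ideal.Quotient.eq_zero_iff_mem,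
      Ideal.mem_span_singleton]

lemma psi_x (i : Fin 4) (hi : i = 0 ∨ i = 1) : nodalPsi k i hi (nx₁ k - nx₂ k) = 0 := by
  simp [nx₁, nx₂, nodalPsi_mk, nodalS]

lemma psi_y (i : Fin 4) (hi : i = 0 ∨ i = 1) : nodalPsi k i hi (ny₁ k - ny₂ k) = 0 := by
  simp [ny₁, ny₂, nodalPsi_mk, nodalS]

lemma mem_cxA (r : nodalR k) : (JA k).mkQ r ∈ cxA k ↔ ∃ s, (nx₁ k - nx₂ k) * s - r ∈ JA k := by
  constructor
  · rintro ⟨a, ha⟩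
    obtain ⟨s, rfl⟩ := (JA k).mkQ_surjective a
    exact ⟨s, (Submodule.Quotient.eq _).1 ha⟩
  · rintro ⟨s, hs⟩
    exact ⟨(JA k).mkQ s, (Submodule.Quotient.eq _).2 hs⟩

lemma mem_cyB (r : nodalR k) : (JB k).mkQ r ∈ cyB k ↔ ∃ s, (ny₁ k - ny₂ k) * s - r ∈ JB k := by
  constructor
  · rintro ⟨a, ha⟩
    obtain ⟨s, rfl⟩ := (JB k).mkQ_surjective a
    exact ⟨s, (Submodule.Quotient.eq _).1 ha⟩
  · rintro ⟨s, hs⟩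
    exact ⟨(JB k).mkQ s, (Submodule.Quotient.eq _).2 hs⟩

lemma nodal_key_s7 (r : nodalR k) :
    ((JA k).mkQ r ∈ cxA k ∧ (JB k).mkQ r ∈ cyB k) ↔ r ∈ JΔ k := by
  rw [mem_cxA, mem_cyB]
  constructor
  · rintro ⟨⟨s, hs⟩, ⟨t, ht⟩⟩
    obtain ⟨p, rfl⟩ := Ideal.Quotient.mk_surjective r
    have h1 : (X 1 : MvPolynomial (Fin 4) k) ∣ nodalS k p := by
      apply dvd_of_psi k 1 (Or.inr rfl)
      have := psi_JA k _ hs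
      rw [map_sub, map_mul, psi_x, zero_mul, zero_sub, neg_eq_zero] at this
      exact this
    have h0 : (X 0 : MvPolynomial (Fin 4) k) ∣ nodalS k p := by
      apply dvd_of_psi k 0 (Or.inl rfl)
      have := psi_JB k _ ht
      rw [map_sub, map_mul, psi_y, zero_mul, zero_sub, neg_eq_zero] at this
      exact this
    obtain ⟨q, hq⟩ := h0
    rw [hq] at h1
    have h2 : (X 1 : MvPolynomial (Fin 4) k) ∣ q := by
      rcases MvPolynomial.X_dvd_mul_iff.1 h1 with h | h
      · rw [MvPolynomial.X_dvd_X] at h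
        simp at h
      · exact h
    have h3 : (Ideal.Quotient.mk _ (nodalS k p) : nodalR k) = 0 := by
      rw [Ideal.Quotient.eq_zero_iff_mem, hq]
      obtain ⟨q', rfl⟩ := h2
      rw [← mul_assoc]
      exact Ideal.mul_mem_right _ _ (Ideal.subset_span (by simp))
    have h4 := nodalS_sub k p
    rw [h3, zero_sub] at h4
    exact neg_mem_iff.1 h4
  · intro h
    obtain ⟨a, b, rfl⟩ := Ideal.mem_span_pair.1 h
    constructor
    · refine ⟨a, Ideal.mem_span_pair.2 ⟨-b, b, by ring⟩⟩
    · refine ⟨b, Ideal.mem_span_pair.2 ⟨-a, a, by ring⟩⟩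

/-- `JK → J_x`. -/
def fA : JK k →ₗ[nodalR k] LinearMap.ker (qA k) :=
  ((JA k).mkQ.comp (JK k).subtype).codRestrict _ (by
    intro r
    exact (Submodule.Quotient.mk_eq_zero _).2 r.2)

/-- `JK → J_y`. -/
def fB : JK k →ₗ[nodalR k] LinearMap.ker (qB k) :=
  ((JB k).mkQ.comp (JK k).subtype).codRestrict _ (by
    intro r
    exact (Submodule.Quotient.mk_eq_zero _).2 r.2)

/-- `JK → Qx × Qy`. -/
def fAB : JK k →ₗ[nodalR k] Qx k × Qy k :=
  ((Submodule.mkQ _).comp (fA k)).prod ((Submodule.mkQ _).comp (fB k))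

lemma JK_split (r : nodalR k) (h : r ∈ JK k) : ∃ a ∈ JA k, ∃ b ∈ JB k, a + b = r := by
  have : JK k ≤ JA k ⊔ JB k := by
    rw [JK, Ideal.span_le]
    rintro a (rfl | rfl | rfl | rfl)
    · exact Ideal.mem_sup_right (Ideal.subset_span (by simp))
    · exact Ideal.mem_sup_left (Ideal.subset_span (by simp))
    · exact Ideal.mem_sup_right (Ideal.subset_span (by simp))
    · exact Ideal.mem_sup_left (Ideal.subset_span (by simp))
  exact Submodule.mem_sup.1 (this h)

lemma fAB_surj : Function.Surjective (fAB k) := by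
  rintro ⟨u, v⟩
  obtain ⟨⟨u, hu⟩, rfl⟩ := Submodule.mkQ_surjective _ u
  obtain ⟨⟨v, hv⟩, rfl⟩ := Submodule.mkQ_surjective _ v
  obtain ⟨r, rfl⟩ := Submodule.mkQ_surjective _ u
  obtain ⟨s, rfl⟩ := Submodule.mkQ_surjective _ v
  have hr : r ∈ JK k := (Submodule.Quotient.mk_eq_zero _).1 hu
  have hs : s ∈ JK k := (Submodule.Quotient.mk_eq_zero _).1 hv
  obtain ⟨a, ha, b, hb, rfl⟩ := JK_split k r hr
  obtain ⟨c, hc, d, hd, rfl⟩ := JK_split k s hs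
  refine ⟨⟨b + c, add_mem (JB_le_JK k hb) (JA_le_JK k hc)⟩, Prod.ext ?_ ?_⟩
  · refine congrArg (Submodule.mkQ _) (Subtype.ext ((Submodule.Quotient.eq _).2 ?_))
    change b + c - (a + b) ∈ JA k
    convert sub_mem hc ha using 1
    ring
  · refine congrArg (Submodule.mkQ _) (Subtype.ext ((Submodule.Quotient.eq _).2 ?_))
    change b + c - (c + d) ∈ JB k
    convert sub_mem hb hd using 1
    ring

lemma fAB_ker : LinearMap.ker (fAB k) = LinearMap.ker ((JΔ k).mkQ.comp (JK k).subtype) := by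
  ext r
  rw [LinearMap.mem_ker, LinearMap.mem_ker]
  have h := nodal_key_s7 k r.1
  refine Iff.trans ?_ (h.trans (Submodule.Quotient.mk_eq_zero _).symm)
  refine Prod.ext_iff.trans (and_congr ?_ ?_)
  · exact Submodule.Quotient.mk_eq_zero _
  · exact Submodule.Quotient.mk_eq_zero _

/-- There is a short exact sequence
`0 → J_x/((x₁−x₂)A) ⊕ J_y/((y₁−y₂)B) → R/(x₁−x₂, y₁−y₂) → K → 0`
in which the surjection is the canonical quotient map; i.e. `(x₁−x₂)·A ⊆ J_x`,
`(y₁−y₂)·B ⊆ J_y`, and there is an injective `R`-linear map from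
`J_x/((x₁−x₂)A) ⊕ J_y/((y₁−y₂)B)` whose image is exactly the kernel of the canonical
quotient map `R/(x₁−x₂, y₁−y₂) → K`. -/
theorem nodal_conic_short_exact_sequence :
    cxA k ≤ LinearMap.ker (qA k) ∧
    cyB k ≤ LinearMap.ker (qB k) ∧
    ∃ ι : (Qx k × Qy k) →ₗ[nodalR k] (nodalR k ⧸ JΔ k),
      Function.Injective ι ∧ LinearMap.range ι = LinearMap.ker (πΔ k) := by
  refine ⟨?_, ?_, ?_⟩
  · rintro _ ⟨a, rfl⟩
    obtain ⟨s, rfl⟩ := (JA k).mkQ_surjective a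
    refine (Submodule.Quotient.mk_eq_zero (JK k)).2 ?_
    exact Ideal.mul_mem_right _ _ (JΔ_le_JK k (Ideal.subset_span (by simp)))
  · rintro _ ⟨a, rfl⟩
    obtain ⟨s, rfl⟩ := (JB k).mkQ_surjective a
    refine (Submodule.Quotient.mk_eq_zero (JK k)).2 ?_
    exact Ideal.mul_mem_right _ _ (JΔ_le_JK k (Ideal.subset_span (by simp)))
  · obtain ⟨ι, h1, h2⟩ := exists_inj_of_ker_eq (fAB k) _ (fAB_surj k) (fAB_ker k)
    refine ⟨ι, h1, h2.trans ?_⟩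
    ext z
    obtain ⟨r, rfl⟩ := (JΔ k).mkQ_surjective z
    constructor
    · rintro ⟨t, ht⟩
      rw [← ht]
      exact (Submodule.Quotient.mk_eq_zero (JK k)).2 t.2
    · intro h
      exact ⟨⟨r, (Submodule.Quotient.mk_eq_zero (JK k)).1 h⟩, rfl⟩

end
end

section
/- With J_x = ker(A → K) the kernel of the canonical quotient map, there is an isomorphism of R-modules J_x ⧸ ((x₁ − x₂)·A) ≅ R ⧸ (x₁ − x₂, y₁, y₂). -/
/-!
Let `k` be a field and `R = k[x₁,y₁,x₂,y₂]/(x₁y₁, x₂y₂)` the coordinate ring of the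
self-product of the nodal conic, realized as `MvPolynomial (Fin 4) k` modulo the ideal
generated by `X 0 * X 1` and `X 2 * X 3`, with `x₁ = X 0`, `y₁ = X 1`, `x₂ = X 2`,
`y₂ = X 3`.  We define the `R`-modules `A = R/(y₁,y₂)`, `B = R/(x₁,x₂)`,
`K = R/(x₁,y₁,x₂,y₂)`, the map `d : A ⊕ B → A ⊕ B`, `(a,b) ↦ ((x₁−x₂)a, (y₁−y₂)b)`,
and the map `ε : A ⊕ B → K` given by the canonical quotient maps on each factor.
-/

open MvPolynomial

set_option synthInstance.maxHeartbeats 1000000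
set_option maxHeartbeats 1000000

noncomputable section

variable (k : Type) [Field k]

/-- The ideal `(x₁ - x₂, y₁, y₂)`. -/
def auxI : Ideal (nodalR k) := Ideal.span {nx₁ k - nx₂ k, ny₁ k, ny₂ k}

/-- The evaluation `R → k[t]`, `x₁, x₂ ↦ t`, `y₁, y₂ ↦ 0`. -/
def auxPi : nodalR k →ₐ[k] Polynomial k :=
  Ideal.Quotient.liftₐ _ (aeval ![Polynomial.X, 0, Polynomial.X, 0]) (by
    intro a ha
    have h : (Ideal.span {X 0 * X 1, X 2 * X 3} : Ideal (MvPolynomial (Fin 4) k)) ≤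
        RingHom.ker (aeval (R := k) ![(Polynomial.X : Polynomial k), 0, Polynomial.X, 0]) := by
      rw [Ideal.span_le]
      rintro b hb
      simp only [Set.mem_insert_iff, Set.mem_singleton_iff] at hb
      rcases hb with rfl | rfl <;> simp [RingHom.mem_ker]
    exact h ha)

lemma auxPi_mk (p : MvPolynomial (Fin 4) k) :
    auxPi k (Ideal.Quotient.mk _ p) =
      aeval ![(Polynomial.X : Polynomial k), 0, Polynomial.X, 0] p := rfl

lemma auxPi_x₁ : auxPi k (nx₁ k) = Polynomial.X := by
  rw [nx₁, auxPi_mk]; simp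
lemma auxPi_x₂ : auxPi k (nx₂ k) = Polynomial.X := by
  rw [nx₂, auxPi_mk]; simp
lemma auxPi_y₁ : auxPi k (ny₁ k) = 0 := by
  rw [ny₁, auxPi_mk]; simp
lemma auxPi_y₂ : auxPi k (ny₂ k) = 0 := by
  rw [ny₂, auxPi_mk]; simp

lemma auxPi_ker (r : nodalR k) (h : auxPi k r = 0) : r ∈ auxI k := by
  have key : ((Ideal.Quotient.mkₐ k (auxI k)).comp
      ((Polynomial.aeval (nx₁ k)).comp (auxPi k))) = Ideal.Quotient.mkₐ k (auxI k) := by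
    apply Ideal.Quotient.algHom_ext
    apply MvPolynomial.algHom_ext
    intro i
    have e0 : auxPi k (Ideal.Quotient.mk _ (X 0)) = Polynomial.X := auxPi_x₁ k
    have e1 : auxPi k (Ideal.Quotient.mk _ (X 1)) = 0 := auxPi_y₁ k
    have e2 : auxPi k (Ideal.Quotient.mk _ (X 2)) = Polynomial.X := auxPi_x₂ k
    have e3 : auxPi k (Ideal.Quotient.mk _ (X 3)) = 0 := auxPi_y₂ k
    fin_cases i
    · simp [e0]; rfl
    · simp [e1]
      exact (Ideal.Quotient.eq_zero_iff_mem.2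
        (Ideal.subset_span (by simp) : ny₁ k ∈ auxI k)).symm
    · simp [e2]
      exact (Ideal.Quotient.eq (x := nx₁ k) (y := nx₂ k)).2
        (Ideal.subset_span (by simp) : nx₁ k - nx₂ k ∈ auxI k)
    · simp [e3]
      exact (Ideal.Quotient.eq_zero_iff_mem.2
        (Ideal.subset_span (by simp) : ny₂ k ∈ auxI k)).symm
  have := DFunLike.congr_fun key r
  simp [h] at this
  exact Ideal.Quotient.eq_zero_iff_mem.1 this.symm

lemma auxPi_JA (r : nodalR k) (h : r ∈ JA k) : auxPi k r = 0 := by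
  have : JA k ≤ RingHom.ker (auxPi k) := by
    rw [JA, Ideal.span_le]
    rintro b hb
    simp only [Set.mem_insert_iff, Set.mem_singleton_iff] at hb
    rcases hb with rfl | rfl
    · exact auxPi_y₁ k
    · exact auxPi_y₂ k
  exact this h

lemma mk_mem_cxA (r : nodalR k) :
    (Submodule.Quotient.mk r : nodalA k) ∈ cxA k ↔ r ∈ auxI k := by
  constructor
  · rintro ⟨a, ha⟩
    obtain ⟨a, rfl⟩ := Submodule.Quotient.mk_surjective _ a
    have h2 : (Submodule.Quotient.mk ((nx₁ k - nx₂ k) * a) : nodalA k) =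
      Submodule.Quotient.mk r := ha
    rw [Submodule.Quotient.eq] at h2
    have h3 := auxPi_JA k _ h2
    apply auxPi_ker
    simpa [auxPi_x₁, auxPi_x₂] using h3
  · intro h
    have hle : auxI k ≤ (cxA k).comap (Submodule.mkQ (JA k)) := by
      rw [auxI, Ideal.span_le]
      rintro b hb
      simp only [Set.mem_insert_iff, Set.mem_singleton_iff] at hb
      rcases hb with rfl | rfl | rfl
      · refine ⟨Submodule.Quotient.mk 1, ?_⟩
        change (Submodule.Quotient.mk ((nx₁ k - nx₂ k) * 1) : nodalA k) = _
        rw [mul_one]; rfl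
      · have : (Submodule.Quotient.mk (ny₁ k) : nodalA k) = 0 :=
          (Submodule.Quotient.mk_eq_zero _).2 (Ideal.subset_span (by simp))
        change (Submodule.Quotient.mk (ny₁ k) : nodalA k) ∈ cxA k
        rw [this]; exact zero_mem _
      · have : (Submodule.Quotient.mk (ny₂ k) : nodalA k) = 0 :=
          (Submodule.Quotient.mk_eq_zero _).2 (Ideal.subset_span (by simp))
        change (Submodule.Quotient.mk (ny₂ k) : nodalA k) ∈ cxA k
        rw [this]; exact zero_mem _
    exact hle h

lemma mk_mem_ker (r : nodalR k) :
    (Submodule.Quotient.mk r : nodalA k) ∈ LinearMap.ker (qA k) ↔ r ∈ JK k := by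
  rw [LinearMap.mem_ker]
  change (Submodule.Quotient.mk r : nodalK k) = 0 ↔ _
  exact Submodule.Quotient.mk_eq_zero _

lemma nx₁_mem : nx₁ k ∈ JK k := Ideal.subset_span (by simp)

/-- Multiplication by `x₁` from `R` to `J_x`. -/
def auxMul : nodalR k →ₗ[nodalR k] ↥(LinearMap.ker (qA k)) :=
  LinearMap.toSpanSingleton _ _
    ⟨Submodule.Quotient.mk (nx₁ k), (mk_mem_ker k _).2 (nx₁_mem k)⟩

lemma auxMul_val (r : nodalR k) :
    ((auxMul k r : ↥(LinearMap.ker (qA k))) : nodalA k) = Submodule.Quotient.mk (r * nx₁ k) :=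
  rfl

lemma JK_decomp (r : nodalR k) (h : r ∈ JK k) : ∃ s, s * nx₁ k - r ∈ auxI k := by
  have m1 : nx₁ k - nx₂ k ∈ auxI k := Ideal.subset_span (by simp)
  have m2 : ny₁ k ∈ auxI k := Ideal.subset_span (by simp)
  have m3 : ny₂ k ∈ auxI k := Ideal.subset_span (by simp)
  simp only [JK, Ideal.mem_span_insert, Ideal.mem_span_singleton'] at h
  obtain ⟨a, _, ⟨b, _, ⟨c, _, ⟨d, rfl⟩, rfl⟩, rfl⟩, rfl⟩ := h
  refine ⟨a + c, ?_⟩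
  have : (a + c) * nx₁ k - (a * nx₁ k + (b * ny₁ k + (c * nx₂ k + d * ny₂ k))) =
      c * (nx₁ k - nx₂ k) - b * ny₁ k - d * ny₂ k := by ring
  rw [this]
  exact sub_mem (sub_mem (Ideal.mul_mem_left _ _ m1) (Ideal.mul_mem_left _ _ m2))
    (Ideal.mul_mem_left _ _ m3)

/-- The map `R → J_x / (x₁ - x₂) A`. -/
def auxPhi : nodalR k →ₗ[nodalR k]
    (↥(LinearMap.ker (qA k)) ⧸ (cxA k).comap (LinearMap.ker (qA k)).subtype) :=
  (Submodule.mkQ _).comp (auxMul k)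

lemma auxPhi_ker : LinearMap.ker (auxPhi k) = auxI k := by
  ext r
  have h1 : r ∈ LinearMap.ker (auxPhi k) ↔ r * nx₁ k ∈ auxI k := by
    rw [← mk_mem_cxA, LinearMap.mem_ker]
    exact Submodule.Quotient.mk_eq_zero _
  rw [h1]
  constructor
  · intro h
    have hI : auxI k ≤ RingHom.ker (auxPi k) := by
      rw [auxI, Ideal.span_le]
      rintro b hb
      simp only [Set.mem_insert_iff, Set.mem_singleton_iff] at hb
      rcases hb with rfl | rfl | rfl
      · simp [RingHom.mem_ker, auxPi_x₁, auxPi_x₂]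
      · exact auxPi_y₁ k
      · exact auxPi_y₂ k
    have h2 : auxPi k (r * nx₁ k) = 0 := hI h
    rw [map_mul, auxPi_x₁] at h2
    apply auxPi_ker
    exact (mul_eq_zero.1 h2).resolve_right Polynomial.X_ne_zero
  · intro h
    exact Ideal.mul_mem_right _ _ h

lemma auxPhi_surj : Function.Surjective (auxPhi k) := by
  intro z
  obtain ⟨⟨z, hz⟩, rfl⟩ := Submodule.Quotient.mk_surjective _ z
  obtain ⟨r, rfl⟩ := Submodule.Quotient.mk_surjective _ z
  obtain ⟨s, hs⟩ := JK_decomp k r ((mk_mem_ker k r).1 hz)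
  refine ⟨s, ?_⟩
  refine (Submodule.Quotient.eq _).2 ?_
  exact (mk_mem_cxA k _).2 hs

/-- With `J_x = ker(A → K)` the kernel of the canonical quotient map, there is an
isomorphism of `R`-modules `J_x ⧸ ((x₁ − x₂)·A) ≅ R ⧸ (x₁ − x₂, y₁, y₂)`. -/
theorem nodal_conic_Jx_quotient :
    Nonempty ((↥(LinearMap.ker (qA k)) ⧸ (cxA k).comap (LinearMap.ker (qA k)).subtype)
      ≃ₗ[nodalR k]
        (nodalR k ⧸ (Ideal.span {nx₁ k - nx₂ k, ny₁ k, ny₂ k} : Ideal (nodalR k)))) := by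
  exact ⟨((Submodule.quotEquivOfEq _ _ (auxPhi_ker k).symm).trans
    ((auxPhi k).quotKerEquivOfSurjective (auxPhi_surj k))).symm⟩

end
end
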